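/- Let N ≥ 2 be an integer, R > 0, and q ≥ p ≥ 2 reals. Suppose u, v : ℝ^N → ℝ are C² on A_R, continuous on closure(A_R), strictly positive on A_R, vanish on the boundary sphere {|x| = R}, satisfy u(x) → 0 and v(x) → 0 as |x| → ∞, and solve −Δu + u = v^{p−1} and −Δv + v = u^{q−1} pointwise in A_R. Then q·v(x)^p ≥ p·u(x)^q for every x ∈ A_R. -/

import Mathlib

open Set Filter

/-- The Laplacian of `f : ℝ^N → ℝ` at `x`: the sum of the second partial derivatives
in the coordinate directions. -/
noncomputable def lap {N : ℕ} (f : EuclideanSpace ℝ (Fin N) → ℝ)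
    (x : EuclideanSpace ℝ (Fin N)) : ℝ :=
  ∑ i : Fin N,
    fderiv ℝ (fun y => fderiv ℝ f y (EuclideanSpace.single i 1)) x
      (EuclideanSpace.single i 1)

/-!
Put `s = q / p` and `k = (p / q) ^ (1 / p)`, so that `φ t = k * t ^ s` is the convex branch of the
curve `q * v ^ p = p * u ^ q`, along which `deriv φ t * φ t ^ (p - 1) = t ^ (q - 1)`. If
`φ ∘ u ≤ v` failed, `φ ∘ u - v` would attain a positive maximum at some `x`, because it lies below
`φ ∘ u`, which vanishes on the boundary and at infinity. With `c = deriv φ (u x)`, convexity makes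
`c * u - v` locally maximal at `x` as well, so `c * Δ u x ≤ Δ v x`. Inserting the equations and
`c * v x ^ (p - 1) ≤ u x ^ (q - 1)` gives `c * u x ≤ v x < φ (u x)`, whereas convexity and
`φ 0 = 0` give `φ (u x) ≤ c * u x`.
-/

open Bornology Topology
open scoped Laplacian

section SecondDerivative

theorem fderiv_fderiv_apply_eq_iteratedFDeriv {𝕜 E F : Type*} [NontriviallyNormedField 𝕜]
    [NormedAddCommGroup E] [NormedSpace 𝕜 E] [NormedAddCommGroup F] [NormedSpace 𝕜 F]
    {f : E → F} {x : E} (hf : ContDiffAt 𝕜 2 f x) (d e : E) :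
    fderiv 𝕜 (fun y => fderiv 𝕜 f y e) x d = iteratedFDeriv 𝕜 2 f x ![d, e] := by
  have hf' : DifferentiableAt 𝕜 (fderiv 𝕜 f) x :=
    (hf.fderiv_right (m := 1) (by norm_num)).differentiableAt one_ne_zero
  rw [fderiv_clm_apply hf' (differentiableAt_const e), iteratedFDeriv_two_apply]
  simp

theorem deriv_deriv_comp_add_smul {E F : Type*} [NormedAddCommGroup E] [NormedSpace ℝ E]
    [NormedAddCommGroup F] [NormedSpace ℝ F] {f : E → F} {x : E} (hf : ContDiffAt ℝ 2 f x) (e : E) :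
    deriv (deriv fun t : ℝ => f (x + t • e)) 0 = iteratedFDeriv ℝ 2 f x ![e, e] := by
  have hline (t : ℝ) : HasDerivAt (fun t : ℝ => x + t • e) e t := by
    simpa using ((hasDerivAt_id t).smul_const e).const_add x
  have hline_tendsto : Tendsto (fun t : ℝ => x + t • e) (𝓝 0) (𝓝 x) := by
    simpa using (hline 0).continuousAt.tendsto
  have hfirst : deriv (fun t : ℝ => f (x + t • e)) =ᶠ[𝓝 0] fun t => fderiv ℝ f (x + t • e) e := by
    filter_upwards [hline_tendsto.eventually (hf.eventually (by simp))] with t ht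
    exact ((ht.differentiableAt two_ne_zero).hasFDerivAt.comp_hasDerivAt t (hline t)).deriv
  have hsecond : DifferentiableAt ℝ (fun y => fderiv ℝ f y e) (x + (0 : ℝ) • e) := by
    rw [zero_smul, add_zero]
    exact ((hf.fderiv_right (m := 1) (by norm_num)).differentiableAt one_ne_zero).clm_apply
      (differentiableAt_const e)
  rw [hfirst.deriv_eq, ← fderiv_fderiv_apply_eq_iteratedFDeriv hf]
  simpa [Function.comp_def] using (hsecond.hasFDerivAt.comp_hasDerivAt 0 (hline 0)).deriv

theorem deriv_deriv_nonpos_of_isLocalMax {f : ℝ → ℝ} {a : ℝ} (hmax : IsLocalMax f a)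
    (hf : ContinuousAt f a) : deriv (deriv f) a ≤ 0 := by
  by_contra! hpos
  have hmin : IsLocalMin f a := isLocalMin_of_deriv_deriv_pos hpos hmax.deriv_eq_zero hf
  have hconst : f =ᶠ[𝓝 a] fun _ => f a := by
    filter_upwards [hmax, hmin] with t hle hge using le_antisymm hle hge
  have hzero : deriv (deriv f) a = 0 := by
    rw [hconst.deriv.deriv_eq]
    simp
  exact hpos.ne' hzero

end SecondDerivative

section Laplacian

theorem lap_eq_laplacian {N : ℕ} {f : EuclideanSpace ℝ (Fin N) → ℝ} {x : EuclideanSpace ℝ (Fin N)}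
    (hf : ContDiffAt ℝ 2 f x) : lap f x = Δ f x := by
  simp only [lap, fderiv_fderiv_apply_eq_iteratedFDeriv hf,
    InnerProductSpace.laplacian_eq_iteratedFDeriv_orthonormalBasis f
      (EuclideanSpace.basisFun (Fin N) ℝ), EuclideanSpace.basisFun_apply]

theorem eqOn_lap_laplacian {N : ℕ} {Ω : Set (EuclideanSpace ℝ (Fin N))}
    {f : EuclideanSpace ℝ (Fin N) → ℝ} (hΩ : IsOpen Ω) (hf : ContDiffOn ℝ 2 f Ω) :
    EqOn (lap f) (Δ f) Ω := fun _ hx =>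
  lap_eq_laplacian (hf.contDiffAt (hΩ.mem_nhds hx))

variable {E : Type*} [NormedAddCommGroup E] [InnerProductSpace ℝ E] [FiniteDimensional ℝ E]
  {u v : E → ℝ} {x : E}

theorem laplacian_nonpos_of_isLocalMax (hu : ContDiffAt ℝ 2 u x) (hmax : IsLocalMax u x) :
    Δ u x ≤ 0 := by
  rw [InnerProductSpace.laplacian_eq_iteratedFDeriv_stdOrthonormalBasis]
  refine Finset.sum_nonpos fun i _ => ?_
  rw [← deriv_deriv_comp_add_smul hu]
  set e := stdOrthonormalBasis ℝ E i
  have hline : Tendsto (fun t : ℝ => x + t • e) (𝓝 0) (𝓝 x) :=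
    Continuous.tendsto' (by fun_prop) _ _ (by simp)
  refine deriv_deriv_nonpos_of_isLocalMax ?_ ?_
  · filter_upwards [hline.eventually hmax] with t ht
    simpa using ht
  · simpa [ContinuousAt, Function.comp_def] using hu.continuousAt.tendsto.comp hline

theorem mul_laplacian_le_of_isLocalMax_comp_sub {φ : ℝ → ℝ} {c : ℝ} (hu : ContDiffAt ℝ 2 u x)
    (hv : ContDiffAt ℝ 2 v x) (hφ : ∀ᶠ y in 𝓝 x, φ (u x) + c * (u y - u x) ≤ φ (u y))
    (hmax : IsLocalMax (fun y => φ (u y) - v y) x) : c * Δ u x ≤ Δ v x := by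
  have hcu : ContDiffAt ℝ 2 (c • u) x := hu.const_smul c
  have hmax_lin : IsLocalMax (c • u - v) x := by
    filter_upwards [hφ, hmax] with y htangent hy
    simp only [Pi.sub_apply, Pi.smul_apply, smul_eq_mul]
    linarith
  have hlap : Δ (c • u - v) x ≤ 0 := laplacian_nonpos_of_isLocalMax (hcu.sub hv) hmax_lin
  rw [hcu.laplacian_sub hv, InnerProductSpace.laplacian_smul c hu, smul_eq_mul] at hlap
  linarith

end Laplacian

theorem exists_isMaxOn_pos_of_le {X : Type*} [TopologicalSpace X] {Ω : Set X} {w g : X → ℝ}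
    (hw : ContinuousOn w Ω) (hwg : ∀ x ∈ Ω, w x ≤ g x) (hg : ContinuousOn g (closure Ω))
    (hg_frontier : ∀ x ∈ frontier Ω, g x ≤ 0) (hg_lim : Tendsto g (cocompact X ⊓ 𝓟 Ω) (𝓝 0))
    {a : X} (ha : a ∈ Ω) (hwa : 0 < w a) : ∃ x ∈ Ω, 0 < w x ∧ IsMaxOn w Ω x := by
  set K := closure Ω ∩ g ⁻¹' Ici (w a)
  have hKΩ : K ⊆ Ω := fun x hx => by
    by_contra hxΩ
    exact (hwa.trans_le hx.2).not_ge
      (hg_frontier x ⟨hx.1, fun hint => hxΩ (interior_subset hint)⟩)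
  have hmemK {x : X} (hx : x ∈ Ω) (hax : w a ≤ w x) : x ∈ K :=
    ⟨subset_closure hx, hax.trans (hwg x hx)⟩
  have hK : IsCompact K := by
    obtain ⟨C, hC, hCg⟩ := mem_cocompact.1
      (eventually_inf_principal.1 (hg_lim.eventually_lt_const hwa))
    refine hC.of_isClosed_subset (hg.preimage_isClosed_of_isClosed isClosed_closure isClosed_Ici) ?_
    intro x hx
    by_contra hxC
    exact (hCg hxC (hKΩ hx)).not_ge hx.2
  obtain ⟨x, hxK, hmax⟩ := hK.exists_isMaxOn ⟨a, hmemK ha le_rfl⟩ (hw.mono hKΩ)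
  have hax : w a ≤ w x := hmax (hmemK ha le_rfl)
  refine ⟨x, hKΩ hxK, hwa.trans_le hax, fun y hy => ?_⟩
  rcases le_total (w a) (w y) with hay | hya
  · exact hmax (hmemK hy hay)
  · exact hya.trans hax

theorem add_deriv_mul_sub_le_of_convexOn {S : Set ℝ} {f : ℝ → ℝ} (hf : ConvexOn ℝ S f) {a t : ℝ}
    (ha : a ∈ S) (ht : t ∈ S) (hfa : DifferentiableAt ℝ f a) :
    f a + deriv f a * (t - a) ≤ f t := by
  rcases lt_trichotomy t a with hta | rfl | hat
  · have hslope := hf.slope_le_deriv ht ha hta hfa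
    rw [slope_def_field, div_le_iff₀ (sub_pos.2 hta)] at hslope
    linarith
  · simp
  · have hslope := hf.deriv_le_slope ha ht hat hfa
    rw [slope_def_field, le_div_iff₀ (sub_pos.2 hat)] at hslope
    linarith

/-- The curve `v ^ p / p = u ^ q / q` in the quadrant `u, v ≥ 0`, written as a graph `v = φ u`. It
is given as a multiple of a power, which makes its convexity visible. -/
noncomputable def levelCurve (p q t : ℝ) : ℝ :=
  (p / q) ^ (1 / p) * t ^ (q / p)

namespace levelCurve

variable {p q t : ℝ}

theorem apply_zero (hp : 0 < p) (hq : 0 < q) : levelCurve p q 0 = 0 := by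
  rw [levelCurve, Real.zero_rpow (div_pos hq hp).ne', mul_zero]

theorem nonneg (hp : 0 ≤ p) (hq : 0 ≤ q) (ht : 0 ≤ t) : 0 ≤ levelCurve p q t := by
  unfold levelCurve
  positivity

theorem continuous (hp : 0 ≤ p) (hq : 0 ≤ q) : Continuous (levelCurve p q) :=
  continuous_const.mul (Real.continuous_rpow_const (div_nonneg hq hp))

theorem mul_rpow_eq (hp : 0 < p) (hq : 0 < q) (ht : 0 ≤ t) :
    q * levelCurve p q t ^ p = p * t ^ q := by
  rw [levelCurve, Real.mul_rpow (by positivity) (by positivity), ← Real.rpow_mul (by positivity),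
    ← Real.rpow_mul ht, one_div_mul_cancel hp.ne', Real.rpow_one, div_mul_cancel₀ q hp.ne']
  field_simp

theorem convexOn (hp : 0 < p) (hpq : p ≤ q) : ConvexOn ℝ (Ici 0) (levelCurve p q) :=
  (convexOn_rpow ((one_le_div hp).2 hpq)).smul
    (Real.rpow_nonneg (div_nonneg hp.le (hp.le.trans hpq)) _)

theorem differentiableAt (ht : 0 < t) : DifferentiableAt ℝ (levelCurve p q) t :=
  ((Real.hasDerivAt_rpow_const (Or.inl ht.ne')).const_mul _).differentiableAt

theorem deriv_nonneg (hp : 0 < p) (hq : 0 < q) (ht : 0 < t) : 0 ≤ deriv (levelCurve p q) t := by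
  have hderiv : HasDerivAt (levelCurve p q) _ t :=
    (Real.hasDerivAt_rpow_const (p := q / p) (Or.inl ht.ne')).const_mul _
  rw [hderiv.deriv]
  positivity

theorem deriv_mul_rpow_sub_one (hp : 0 < p) (hq : 0 < q) (ht : 0 < t) :
    deriv (levelCurve p q) t * levelCurve p q t ^ (p - 1) = t ^ (q - 1) := by
  have hpos : 0 < levelCurve p q t := by
    unfold levelCurve
    positivity
  have hleft : HasDerivAt (fun r => q * levelCurve p q r ^ p)
      (q * (deriv (levelCurve p q) t * p * levelCurve p q t ^ (p - 1))) t :=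
    ((differentiableAt ht).hasDerivAt.rpow_const (Or.inl hpos.ne')).const_mul q
  have hright : HasDerivAt (fun r => p * r ^ q) (p * (q * t ^ (q - 1))) t :=
    (Real.hasDerivAt_rpow_const (Or.inl ht.ne')).const_mul p
  have hcurve : (fun r => q * levelCurve p q r ^ p) =ᶠ[𝓝 t] fun r => p * r ^ q := by
    filter_upwards [lt_mem_nhds ht] with r hr using mul_rpow_eq hp hq hr.le
  have heq := hleft.unique (hright.congr_of_eventuallyEq hcurve)
  apply mul_left_cancel₀ (mul_pos hp hq).ne'
  linear_combination heq

end levelCurve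

section Comparison

variable {E : Type*} [NormedAddCommGroup E] [InnerProductSpace ℝ E] [FiniteDimensional ℝ E]
  {Ω : Set E} {p q : ℝ} {u v : E → ℝ}

theorem levelCurve_comp_le_of_isLocalMax (hp : 1 ≤ p) (hpq : p ≤ q) {x : E}
    (hu : ContDiffAt ℝ 2 u x) (hv : ContDiffAt ℝ 2 v x) (hux : 0 < u x)
    (hu0 : ∀ᶠ y in 𝓝 x, 0 ≤ u y) (hvx : 0 ≤ v x) (hu_eq : -Δ u x + u x ≤ v x ^ (p - 1))
    (hv_eq : u x ^ (q - 1) ≤ -Δ v x + v x)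
    (hmax : IsLocalMax (fun y => levelCurve p q (u y) - v y) x) :
    levelCurve p q (u x) ≤ v x := by
  by_contra! hlt
  have hp0 : 0 < p := by linarith
  have hq0 : 0 < q := by linarith
  set c := deriv (levelCurve p q) (u x)
  have hc : 0 ≤ c := levelCurve.deriv_nonneg hp0 hq0 hux
  have htangent {t : ℝ} (ht : 0 ≤ t) :
      levelCurve p q (u x) + c * (t - u x) ≤ levelCurve p q t :=
    add_deriv_mul_sub_le_of_convexOn (levelCurve.convexOn hp0 hpq) hux.le ht
      (levelCurve.differentiableAt hux)
  have hlap : c * Δ u x ≤ Δ v x :=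
    mul_laplacian_le_of_isLocalMax_comp_sub hu hv (hu0.mono fun y => htangent) hmax
  have hcv : c * v x ^ (p - 1) ≤ u x ^ (q - 1) := by
    calc c * v x ^ (p - 1) ≤ c * levelCurve p q (u x) ^ (p - 1) := by gcongr
      _ = u x ^ (q - 1) := levelCurve.deriv_mul_rpow_sub_one hp0 hq0 hux
  have hcu : levelCurve p q (u x) ≤ c * u x := by
    have hzero := htangent le_rfl
    rw [levelCurve.apply_zero hp0 hq0] at hzero
    linarith
  have hsub : c * (-Δ u x + u x) ≤ c * v x ^ (p - 1) := mul_le_mul_of_nonneg_left hu_eq hc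
  linarith

theorem levelCurve_comp_le (hΩ : IsOpen Ω) (hp : 1 ≤ p) (hpq : p ≤ q)
    (hu : ContDiffOn ℝ 2 u Ω) (hv : ContDiffOn ℝ 2 v Ω) (huc : ContinuousOn u (closure Ω))
    (hu0 : ∀ x ∈ Ω, 0 ≤ u x) (hv0 : ∀ x ∈ Ω, 0 ≤ v x) (hub : ∀ x ∈ frontier Ω, u x = 0)
    (hulim : Tendsto u (cobounded E ⊓ 𝓟 Ω) (𝓝 0))
    (hu_eq : ∀ x ∈ Ω, -Δ u x + u x ≤ v x ^ (p - 1))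
    (hv_eq : ∀ x ∈ Ω, u x ^ (q - 1) ≤ -Δ v x + v x) :
    ∀ x ∈ Ω, levelCurve p q (u x) ≤ v x := by
  intro a ha
  by_contra! hlt
  have hp0 : 0 < p := by linarith
  have hq0 : 0 < q := by linarith
  have hφ := levelCurve.continuous hp0.le hq0.le
  have hφ0 : levelCurve p q 0 = 0 := levelCurve.apply_zero hp0 hq0
  have hφu_lim : Tendsto (fun y => levelCurve p q (u y)) (cocompact E ⊓ 𝓟 Ω) (𝓝 0) := by
    rw [← Metric.cobounded_eq_cocompact, ← hφ0]
    exact (hφ.tendsto 0).comp hulim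
  obtain ⟨x, hx, hwx, hmax⟩ := exists_isMaxOn_pos_of_le
    (w := fun y => levelCurve p q (u y) - v y) (g := fun y => levelCurve p q (u y))
    ((hφ.comp_continuousOn hu.continuousOn).sub hv.continuousOn)
    (fun y hy => sub_le_self _ (hv0 y hy)) (hφ.comp_continuousOn huc)
    (fun y hy => by simp only [hub y hy, hφ0, le_refl]) hφu_lim ha (sub_pos.2 hlt)
  have hΩx : Ω ∈ 𝓝 x := hΩ.mem_nhds hx
  have hux : 0 < u x := by
    refine (hu0 x hx).lt_of_ne' fun hux => ?_
    rw [hux, hφ0] at hwx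
    linarith [hv0 x hx]
  exact (sub_pos.1 hwx).not_ge <|
    levelCurve_comp_le_of_isLocalMax hp hpq (hu.contDiffAt hΩx) (hv.contDiffAt hΩx) hux
      (eventually_of_mem hΩx hu0) (hv0 x hx) (hu_eq x hx) (hv_eq x hx) (hmax.isLocalMax hΩx)

theorem stmt_4_general (hΩ : IsOpen Ω) (hp : 1 ≤ p) (hpq : p ≤ q)
    (hu : ContDiffOn ℝ 2 u Ω) (hv : ContDiffOn ℝ 2 v Ω) (huc : ContinuousOn u (closure Ω))
    (hu0 : ∀ x ∈ Ω, 0 ≤ u x) (hv0 : ∀ x ∈ Ω, 0 ≤ v x) (hub : ∀ x ∈ frontier Ω, u x = 0)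
    (hulim : Tendsto u (cobounded E ⊓ 𝓟 Ω) (𝓝 0))
    (hu_eq : ∀ x ∈ Ω, -Δ u x + u x ≤ v x ^ (p - 1))
    (hv_eq : ∀ x ∈ Ω, u x ^ (q - 1) ≤ -Δ v x + v x) :
    ∀ x ∈ Ω, p * u x ^ q ≤ q * v x ^ p := by
  intro x hx
  have hp0 : 0 < p := by linarith
  have hq0 : 0 < q := by linarith
  have hle := levelCurve_comp_le hΩ hp hpq hu hv huc hu0 hv0 hub hulim hu_eq hv_eq x hx
  have hφ : 0 ≤ levelCurve p q (u x) := levelCurve.nonneg hp0.le hq0.le (hu0 x hx)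
  rw [← levelCurve.mul_rpow_eq hp0 hq0 (hu0 x hx)]
  gcongr

end Comparison

/-- pointwise comparison `q·v^p ≥ p·u^q` on the exterior domain
`A_R = {|x| > R}` for positive classical solutions of the system
`−Δu + u = v^(p−1)`, `−Δv + v = u^(q−1)` vanishing on `{|x| = R}` and at infinity. -/
theorem stmt_4 (N : ℕ) (hN : 2 ≤ N) (R : ℝ) (hR : 0 < R)
    (p q : ℝ) (hp : 2 ≤ p) (hpq : p ≤ q)
    (AR : Set (EuclideanSpace ℝ (Fin N))) (hAR : AR = {x | R < ‖x‖})
    (u v : EuclideanSpace ℝ (Fin N) → ℝ)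
    (hu2 : ContDiffOn ℝ 2 u AR) (hv2 : ContDiffOn ℝ 2 v AR)
    (huc : ContinuousOn u (closure AR)) (hvc : ContinuousOn v (closure AR))
    (hup : ∀ x ∈ AR, 0 < u x) (hvp : ∀ x ∈ AR, 0 < v x)
    (hub : ∀ x : EuclideanSpace ℝ (Fin N), ‖x‖ = R → u x = 0)
    (hvb : ∀ x : EuclideanSpace ℝ (Fin N), ‖x‖ = R → v x = 0)
    (hulim : Tendsto u (comap (fun x : EuclideanSpace ℝ (Fin N) => ‖x‖) atTop) (nhds 0))
    (hvlim : Tendsto v (comap (fun x : EuclideanSpace ℝ (Fin N) => ‖x‖) atTop) (nhds 0))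
    (heq1 : ∀ x ∈ AR, -lap u x + u x = v x ^ (p - 1))
    (heq2 : ∀ x ∈ AR, -lap v x + v x = u x ^ (q - 1)) :
    ∀ x ∈ AR, p * u x ^ q ≤ q * v x ^ p := by
  subst hAR
  have hΩ : IsOpen {x : EuclideanSpace ℝ (Fin N) | R < ‖x‖} :=
    isOpen_lt continuous_const continuous_norm
  exact stmt_4_general hΩ (one_le_two.trans hp) hpq hu2 hv2 huc
    (fun x hx => (hup x hx).le) (fun x hx => (hvp x hx).le)
    (fun x hx => hub x (frontier_lt_subset_eq continuous_const continuous_norm hx).symm)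
    ((comap_norm_atTop (E := EuclideanSpace ℝ (Fin N)) ▸ hulim).mono_left inf_le_left)
    (fun x hx => (eqOn_lap_laplacian hΩ hu2 hx ▸ heq1 x hx).le)
    (fun x hx => (eqOn_lap_laplacian hΩ hv2 hx ▸ heq2 x hx).ge)
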